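/- If 1 ≤ p ≤ 2, then for any initialization x^{(0)} ∈ ℝ^d, the sequence of IRLS iterates (x^{(t)}) converges to the unique global minimizer x* of Φ. -/

import Mathlib

open scoped ContDiff RealInnerProductSpace
open Filter

section Irls

/-- A concave power lies below its tangent lines. -/
theorem rpow_le_tangent {q s t : ℝ} (hq0 : 0 ≤ q) (hq1 : q ≤ 1) (hs : 0 < s) (ht : 0 ≤ t) :
    t ^ q ≤ s ^ q + q * s ^ (q - 1) * (t - s) := by
  have hb := rpow_one_add_le_one_add_mul_self (s := t / s - 1) (p := q)
    (by linarith [div_nonneg ht hs.le]) hq0 hq1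
  rw [add_sub_cancel, Real.div_rpow ht hs.le, div_le_iff₀ (Real.rpow_pos_of_pos hs q)] at hb
  refine hb.trans_eq ?_
  rw [Real.rpow_sub_one hs.ne']
  field_simp

/-- A convex power lies above its tangent lines. -/
theorem tangent_le_rpow {q s t : ℝ} (hq1 : 1 ≤ q) (hs : 0 < s) (ht : 0 ≤ t) :
    s ^ q + q * s ^ (q - 1) * (t - s) ≤ t ^ q := by
  have hb := one_add_mul_self_le_rpow_one_add (s := t / s - 1) (p := q)
    (by linarith [div_nonneg ht hs.le]) hq1
  rw [add_sub_cancel, Real.div_rpow ht hs.le, le_div_iff₀ (Real.rpow_pos_of_pos hs q)] at hb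
  refine le_trans (le_of_eq ?_) hb
  rw [Real.rpow_sub_one hs.ne']
  field_simp

/-- The smoothed power `(‖u‖ ^ 2 + ε) ^ (p / 2)` of the norm lies above its tangents if `1 ≤ p`. -/
theorem smoothed_norm_rpow_ge_tangent {E : Type*} [NormedAddCommGroup E]
    [InnerProductSpace ℝ E] {ε p : ℝ} (hε : 0 < ε) (hp : 1 ≤ p) (u v : E) :
    (‖u‖ ^ 2 + ε) ^ (p / 2) + p * (‖u‖ ^ 2 + ε) ^ (p / 2 - 1) * ⟪u, v - u⟫
      ≤ (‖v‖ ^ 2 + ε) ^ (p / 2) := by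
  have hs : 0 < ‖u‖ ^ 2 + ε := by positivity
  have ht : 0 < ‖v‖ ^ 2 + ε := by positivity
  have hσ : 0 < √(‖u‖ ^ 2 + ε) := Real.sqrt_pos.2 hs
  have hpow (r : ℝ) {b : ℝ} (hb : 0 < b) : √b ^ r = b ^ (r / 2) := by
    rw [Real.sqrt_eq_rpow, ← Real.rpow_mul hb.le]
    ring_nf
  have hcs : ⟪u, v⟫ + ε ≤ √(‖u‖ ^ 2 + ε) * √(‖v‖ ^ 2 + ε) := by
    rw [← Real.sqrt_mul hs.le]
    refine Real.le_sqrt_of_sq_le ?_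
    have h := real_inner_le_norm u v
    have h2 : ⟪u, v⟫ ^ 2 ≤ (‖u‖ * ‖v‖) ^ 2 := sq_le_sq.2 <| by
      simpa [abs_mul] using abs_real_inner_le_norm u v
    nlinarith [sq_nonneg (‖u‖ - ‖v‖)]
  have htan := tangent_le_rpow hp hσ (Real.sqrt_nonneg (‖v‖ ^ 2 + ε))
  rw [hpow p hs, hpow p ht] at htan
  refine le_trans ?_ htan
  have hfac : √(‖u‖ ^ 2 + ε) ^ (p - 1) = (‖u‖ ^ 2 + ε) ^ (p / 2 - 1) * √(‖u‖ ^ 2 + ε) := by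
    rw [show p / 2 - 1 = (p - 2) / 2 by ring, ← hpow (p - 2) hs, ← Real.rpow_add_one hσ.ne']
    ring_nf
  have hin : ⟪u, v - u⟫ ≤ √(‖u‖ ^ 2 + ε) * (√(‖v‖ ^ 2 + ε) - √(‖u‖ ^ 2 + ε)) := by
    rw [inner_sub_right, real_inner_self_eq_norm_sq]
    nlinarith [Real.mul_self_sqrt hs.le]
  have hc : 0 ≤ p * (‖u‖ ^ 2 + ε) ^ (p / 2 - 1) := by positivity
  rw [hfac]
  nlinarith [mul_le_mul_of_nonneg_left hin hc]

variable {E ι : Type*} [NormedAddCommGroup E]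

/-- The reweighting coefficients of the IRLS step at `x`. -/
noncomputable def irlsWeight (a : ι → E) (w : ι → ℝ) (ε p : ℝ) (x : E) (j : ι) : ℝ :=
  w j * (‖x - a j‖ ^ 2 + ε) ^ (p / 2 - 1)

variable {a : ι → E} {w : ι → ℝ} {ε p : ℝ}

theorem irlsWeight_pos (hw : ∀ j, 0 < w j) (hε : 0 < ε) (x : E) (j : ι) :
    0 < irlsWeight a w ε p x j :=
  mul_pos (hw j) (Real.rpow_pos_of_pos (by positivity) _)

theorem continuous_irlsWeight (hε : 0 < ε) (j : ι) :
    Continuous fun x ↦ irlsWeight a w ε p x j := by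
  unfold irlsWeight
  exact continuous_const.mul <| Continuous.rpow_const (by fun_prop) fun x ↦
    Or.inl (by positivity)

variable [Fintype ι]

theorem sum_irlsWeight_pos [Nonempty ι] (hw : ∀ j, 0 < w j) (hε : 0 < ε) (x : E) :
    0 < ∑ j, irlsWeight a w ε p x j :=
  Finset.sum_pos (fun j _ ↦ irlsWeight_pos hw hε x j) Finset.univ_nonempty

/-- The smoothed `p`-th power objective `∑ j, w j * (‖x - a j‖ ^ 2 + ε) ^ (p / 2)`. -/
noncomputable def irlsObjective (a : ι → E) (w : ι → ℝ) (ε p : ℝ) (x : E) : ℝ :=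
  ∑ j, w j * (‖x - a j‖ ^ 2 + ε) ^ (p / 2)

theorem continuous_irlsObjective (hε : 0 < ε) : Continuous (irlsObjective a w ε p) := by
  unfold irlsObjective
  exact continuous_finsetSum _ fun j _ ↦ continuous_const.mul <|
    Continuous.rpow_const (by fun_prop) fun x ↦ Or.inl (by positivity)

theorem irlsObjective_nonneg (hw : ∀ j, 0 < w j) (hε : 0 < ε) (x : E) :
    0 ≤ irlsObjective a w ε p x :=
  Finset.sum_nonneg fun j _ ↦ mul_nonneg (hw j).le (Real.rpow_nonneg (by positivity) _)

variable [InnerProductSpace ℝ E]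

/-- One IRLS step from `x`: the barycenter of the points `a j` with the weights `irlsWeight`. -/
noncomputable def irlsStep (a : ι → E) (w : ι → ℝ) (ε p : ℝ) (x : E) : E :=
  (∑ j, irlsWeight a w ε p x j)⁻¹ • ∑ j, irlsWeight a w ε p x j • a j

theorem continuous_irlsStep [Nonempty ι] (hw : ∀ j, 0 < w j) (hε : 0 < ε) :
    Continuous (irlsStep a w ε p) := by
  unfold irlsStep
  have h := continuous_irlsWeight (a := a) (w := w) (p := p) hε
  exact ((continuous_finsetSum _ fun j _ ↦ h j).inv₀ fun x ↦ (sum_irlsWeight_pos hw hε x).ne').smul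
    (continuous_finsetSum _ fun j _ ↦ (h j).smul continuous_const)

theorem sum_irlsWeight_smul_sub [Nonempty ι] (hw : ∀ j, 0 < w j) (hε : 0 < ε) (x : E) :
    ∑ j, irlsWeight a w ε p x j • (x - a j)
      = (∑ j, irlsWeight a w ε p x j) • (x - irlsStep a w ε p x) := by
  simp only [smul_sub, Finset.sum_sub_distrib, irlsStep, Finset.sum_smul,
    smul_inv_smul₀ (sum_irlsWeight_pos hw hε x).ne']

theorem irlsStep_mem_convexHull [Nonempty ι] (hw : ∀ j, 0 < w j) (hε : 0 < ε) (x : E) :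
    irlsStep a w ε p x ∈ convexHull ℝ (Set.range a) :=
  Finset.centerMass_mem_convexHull _ (fun j _ ↦ (irlsWeight_pos hw hε x j).le)
    (sum_irlsWeight_pos hw hε x) fun j _ ↦ Set.mem_range_self j

/-- Sufficient decrease of the objective along an IRLS step. -/
theorem irlsObjective_irlsStep_le [Nonempty ι] (hw : ∀ j, 0 < w j) (hε : 0 < ε)
    (hp0 : 0 ≤ p) (hp2 : p ≤ 2) (x : E) :
    irlsObjective a w ε p (irlsStep a w ε p x) ≤ irlsObjective a w ε p x
      - p / 2 * (∑ j, irlsWeight a w ε p x j) * ‖x - irlsStep a w ε p x‖ ^ 2 := by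
  set y := irlsStep a w ε p x with hy
  have hterm (j : ι) : w j * (‖y - a j‖ ^ 2 + ε) ^ (p / 2) ≤
      w j * (‖x - a j‖ ^ 2 + ε) ^ (p / 2)
        + p / 2 * (irlsWeight a w ε p x j * ‖x - y‖ ^ 2
          - 2 * ⟪irlsWeight a w ε p x j • (x - a j), x - y⟫) := by
    have h := mul_le_mul_of_nonneg_left (rpow_le_tangent (q := p / 2) (s := ‖x - a j‖ ^ 2 + ε)
      (t := ‖y - a j‖ ^ 2 + ε) (by linarith) (by linarith) (by positivity) (by positivity))
      (hw j).le
    refine h.trans_eq ?_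
    have hn : ‖y - a j‖ ^ 2 = ‖x - a j‖ ^ 2 - 2 * ⟪x - a j, x - y⟫ + ‖x - y‖ ^ 2 := by
      rw [← norm_sub_sq_real]
      congr 2
      abel
    rw [hn, real_inner_smul_left, irlsWeight]
    ring
  refine (Finset.sum_le_sum fun j _ ↦ hterm j).trans_eq ?_
  rw [Finset.sum_add_distrib, ← Finset.mul_sum, Finset.sum_sub_distrib, ← Finset.sum_mul,
    ← Finset.mul_sum, ← sum_inner, sum_irlsWeight_smul_sub hw hε, ← hy, real_inner_smul_left,
    real_inner_self_eq_norm_sq, irlsObjective]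
  ring

/-- A fixed point of the IRLS step minimizes the objective globally if `1 ≤ p`. -/
theorem irlsObjective_le_of_irlsStep_eq [Nonempty ι] (hw : ∀ j, 0 < w j) (hε : 0 < ε)
    (hp1 : 1 ≤ p) {x : E} (hx : irlsStep a w ε p x = x) (y : E) :
    irlsObjective a w ε p x ≤ irlsObjective a w ε p y := by
  have hterm (j : ι) : w j * (‖x - a j‖ ^ 2 + ε) ^ (p / 2)
      + p * ⟪irlsWeight a w ε p x j • (x - a j), y - x⟫
        ≤ w j * (‖y - a j‖ ^ 2 + ε) ^ (p / 2) := by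
    have h := mul_le_mul_of_nonneg_left
      (smoothed_norm_rpow_ge_tangent hε hp1 (x - a j) (y - a j)) (hw j).le
    refine le_trans (le_of_eq ?_) h
    rw [real_inner_smul_left, irlsWeight, sub_sub_sub_cancel_right]
    ring
  refine le_trans (le_of_eq ?_) (Finset.sum_le_sum fun j _ ↦ hterm j)
  rw [Finset.sum_add_distrib, ← Finset.mul_sum, ← sum_inner, sum_irlsWeight_smul_sub hw hε, hx]
  simp [irlsObjective]

/-- A cluster point of a convergent function is its limit. -/
theorem MapClusterPt.eq_of_tendsto {X Y : Type*} [TopologicalSpace X] [T2Space X] {l : Filter Y}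
    {u : Y → X} {y z : X} (hz : MapClusterPt z l u) (hu : Tendsto u l (nhds y)) : z = y :=
  eq_of_nhds_neBot <| hz.clusterPt.neBot.mono <| inf_le_inf_left _ hu

/-- A cluster point of the IRLS iterates is a fixed point of the IRLS step. -/
theorem irlsStep_eq_of_mapClusterPt [Nonempty ι] (hw : ∀ j, 0 < w j) (hε : 0 < ε)
    (hp0 : 0 < p) (hp2 : p ≤ 2) {x : ℕ → E} (hx : ∀ t, x (t + 1) = irlsStep a w ε p (x t))
    {z : E} (hz : MapClusterPt z atTop x) : irlsStep a w ε p z = z := by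
  have hdec := irlsObjective_irlsStep_le (a := a) hw hε hp0.le hp2
  have hanti : Antitone fun t ↦ irlsObjective a w ε p (x t) := antitone_nat_of_succ_le fun t ↦ by
    rw [hx]
    have := sum_irlsWeight_pos (a := a) (p := p) hw hε (x t)
    exact (hdec (x t)).trans (sub_le_self _ (by positivity))
  have hlim := tendsto_atTop_ciInf hanti
    ⟨0, Set.forall_mem_range.2 fun t ↦ irlsObjective_nonneg hw hε (x t)⟩
  have hΦ := continuous_irlsObjective (a := a) (w := w) (p := p) hε
  have hT := continuous_irlsStep (a := a) (p := p) hw hε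
  have hlim' : Tendsto (irlsObjective a w ε p ∘ irlsStep a w ε p ∘ x) atTop
      (nhds (⨅ t, irlsObjective a w ε p (x t))) := by
    refine (hlim.comp (tendsto_add_atTop_nat 1)).congr fun t ↦ ?_
    simp [hx]
  have hz₀ := (hz.continuousAt_comp hΦ.continuousAt).eq_of_tendsto hlim
  have hz₁ := (hz.continuousAt_comp (hΦ.comp hT).continuousAt).eq_of_tendsto hlim'
  have h := hdec z
  rw [← Function.comp_apply (f := irlsObjective a w ε p), hz₁, hz₀] at h
  have hM : 0 < p / 2 * ∑ j, irlsWeight a w ε p z j :=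
    mul_pos (by linarith) (sum_irlsWeight_pos hw hε z)
  have hsq : ‖z - irlsStep a w ε p z‖ ^ 2 ≤ 0 := by
    by_contra! hpos
    linarith [mul_pos hM hpos]
  have hnorm : ‖z - irlsStep a w ε p z‖ = 0 := by
    simpa using le_antisymm hsq (sq_nonneg _)
  exact (sub_eq_zero.1 (norm_eq_zero.1 hnorm)).symm

end Irls

theorem stmt_16
    (d n : ℕ) (hd : 1 ≤ d) (hn : 1 ≤ n)
    (a : Fin n → EuclideanSpace ℝ (Fin d))
    (w : Fin n → ℝ) (hw : ∀ j, 0 < w j)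
    (ε : ℝ) (hε : 0 < ε)
    (p : ℝ) (hp1 : 1 ≤ p) (hp2 : p ≤ 2)
    (Φ : EuclideanSpace ℝ (Fin d) → ℝ)
    (hΦ : ∀ x, Φ x = ∑ j, w j * (‖x - a j‖ ^ 2 + ε) ^ (p / 2))
    (x : ℕ → EuclideanSpace ℝ (Fin d))
    (hx : ∀ t, x (t + 1) =
      (∑ j, w j * (‖x t - a j‖ ^ 2 + ε) ^ (p / 2 - 1))⁻¹ •
        ∑ j, (w j * (‖x t - a j‖ ^ 2 + ε) ^ (p / 2 - 1)) • a j)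
    (xstar : EuclideanSpace ℝ (Fin d))
    (hmin : ∀ y, Φ xstar ≤ Φ y)
    (huniq : ∀ z, (∀ y, Φ z ≤ Φ y) → z = xstar) :
    Tendsto x atTop (nhds xstar) := by
  have : Nonempty (Fin n) := ⟨⟨0, hn⟩⟩
  obtain rfl : Φ = irlsObjective a w ε p := funext hΦ
  have hstep : ∀ t, x (t + 1) = irlsStep a w ε p (x t) := hx
  refine (Set.finite_range a).isCompact_convexHull (𝕜 := ℝ)
    |>.tendsto_nhds_of_unique_mapClusterPt ?_ fun z _ hz ↦ huniq z ?_
  · filter_upwards [eventually_ge_atTop 1] with t ht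
    obtain ⟨s, rfl⟩ := Nat.exists_eq_add_of_le' ht
    exact hstep s ▸ irlsStep_mem_convexHull hw hε (x s)
  · exact irlsObjective_le_of_irlsStep_eq hw hε hp1
      (irlsStep_eq_of_mapClusterPt hw hε (by linarith) hp2 hstep hz)
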